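/- arXiv:2502.00172 — 3 statements merged into one kernel-verified Lean document; each statement's English description precedes it below -/
import Mathlib

section
/- Let S*, S₁ ⊆ ℝ^d be measurable sets with P_{(x,y)∼D}[x ∈ S*] > 0 and P_{(x,y)∼D}[x ∈ S₁] > 0, and let ε > 0. If |P_{(x,y)∼D}[x ∈ S₁] − P_{(x,y)∼D}[x ∈ S*]| ≤ ε and err_{D|S₁}(S₁) ≤ err_{D|S*}(S*) + ε, then err_D(S₁) ≤ err_D(S*) + 5ε. -/
open MeasureTheory

/-- Classification loss `err_D(S) = P_{(x,y)∼D}[y = 1[x ∈ S]]`. -/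
noncomputable def errD {d : ℕ} (μ : Measure (EuclideanSpace ℝ (Fin d) × ℝ))
    (S : Set (EuclideanSpace ℝ (Fin d))) : ℝ :=
  (μ {p | p.2 = S.indicator (fun _ => (1 : ℝ)) p.1}).toReal

/-- Conditional classification loss `err_{D|T}(S) = P_{(x,y)∼D}[y = 1[x ∈ S] | x ∈ T]`. -/
noncomputable def errCond {d : ℕ} (μ : Measure (EuclideanSpace ℝ (Fin d) × ℝ))
    (T S : Set (EuclideanSpace ℝ (Fin d))) : ℝ :=
  (μ {p | p.2 = S.indicator (fun _ => (1 : ℝ)) p.1 ∧ p.1 ∈ T}).toReal /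
    (μ {p | p.1 ∈ T}).toReal

/-- Writing `a = P[y = 1, x ∈ S]`, the classification loss is `P[y = 0] - P[x ∈ S] + 2a`. -/
lemma errD_eq {d : ℕ} (μ : Measure (EuclideanSpace ℝ (Fin d) × ℝ)) [IsFiniteMeasure μ]
    (hlab : ∀ᵐ p ∂μ, p.2 = 0 ∨ p.2 = 1)
    {S : Set (EuclideanSpace ℝ (Fin d))} (hS : MeasurableSet S) :
    errD μ S = μ.real {p | p.2 = 0} - μ.real {p | p.1 ∈ S} +
      2 * μ.real {p | p.2 = S.indicator (fun _ => (1 : ℝ)) p.1 ∧ p.1 ∈ S} := by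
  have hT : MeasurableSet {p : EuclideanSpace ℝ (Fin d) × ℝ | p.1 ∈ S} := measurable_fst hS
  have hE : MeasurableSet {p : EuclideanSpace ℝ (Fin d) × ℝ |
      p.2 = S.indicator (fun _ => (1 : ℝ)) p.1} :=
    measurableSet_eq_fun measurable_snd
      ((measurable_const.indicator hS).comp measurable_fst)
  have hE_split := measureReal_inter_add_sdiff (μ := μ)
    (s := {p | p.2 = S.indicator (fun _ => (1 : ℝ)) p.1}) hT
  have hZ_split := measureReal_inter_add_sdiff (μ := μ) (s := {p | p.2 = 0}) hT
  have hT_split := measureReal_inter_add_sdiff (μ := μ) (s := {p | p.1 ∈ S}) hE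
  have h_diff : {p : EuclideanSpace ℝ (Fin d) × ℝ | p.2 = S.indicator (fun _ => (1 : ℝ)) p.1} \
      {p | p.1 ∈ S} = {p | p.2 = 0} \ {p | p.1 ∈ S} := by
    ext p
    by_cases hp : p.1 ∈ S <;> simp [hp]
  have h_ae : μ.real ({p | p.1 ∈ S} \ {p | p.2 = S.indicator (fun _ => (1 : ℝ)) p.1}) =
      μ.real ({p | p.2 = 0} ∩ {p | p.1 ∈ S}) := by
    refine measureReal_congr (Filter.eventuallyEq_set.mpr ?_)
    filter_upwards [hlab] with p hp
    by_cases hpS : p.1 ∈ S <;> rcases hp with hp | hp <;> simp [hpS, hp]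
  rw [Set.inter_comm] at hT_split
  rw [h_diff] at hE_split
  rw [h_ae] at hT_split
  change μ.real {p | p.2 = S.indicator (fun _ => (1 : ℝ)) p.1} = _
  rw [Set.ofPred_and]
  linarith

/-- additive reduction: if `|P[x ∈ S₁] − P[x ∈ S*]| ≤ ε` and
`err_{D|S₁}(S₁) ≤ err_{D|S*}(S*) + ε` then `err_D(S₁) ≤ err_D(S*) + 5ε`. -/
theorem stmt13 (d : ℕ)
    (μ : Measure (EuclideanSpace ℝ (Fin d) × ℝ)) [IsProbabilityMeasure μ]
    (hlab : ∀ᵐ p ∂μ, p.2 = 0 ∨ p.2 = 1)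
    (Sstar S₁ : Set (EuclideanSpace ℝ (Fin d)))
    (hSstar : MeasurableSet Sstar) (hS₁ : MeasurableSet S₁)
    (hpos : 0 < (μ {p | p.1 ∈ Sstar}).toReal) (hpos₁ : 0 < (μ {p | p.1 ∈ S₁}).toReal)
    (ε : ℝ) (hε : 0 < ε)
    (hclose : |(μ {p | p.1 ∈ S₁}).toReal - (μ {p | p.1 ∈ Sstar}).toReal| ≤ ε)
    (herr : errCond μ S₁ S₁ ≤ errCond μ Sstar Sstar + ε) :
    errD μ S₁ ≤ errD μ Sstar + 5 * ε := by
  rw [errD_eq μ hlab hS₁, errD_eq μ hlab hSstar]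
  unfold errCond at herr
  simp only [← measureReal_def] at hpos hpos₁ hclose herr
  have hle : μ.real {p | p.2 = Sstar.indicator (fun _ => (1 : ℝ)) p.1 ∧ p.1 ∈ Sstar} ≤
      μ.real {p | p.1 ∈ Sstar} := measureReal_mono fun _ hp => hp.2
  have hs₁ : μ.real {p | p.1 ∈ S₁} ≤ 1 := measureReal_le_one
  set a := μ.real {p | p.2 = Sstar.indicator (fun _ => (1 : ℝ)) p.1 ∧ p.1 ∈ Sstar}
  set a₁ := μ.real {p | p.2 = S₁.indicator (fun _ => (1 : ℝ)) p.1 ∧ p.1 ∈ S₁}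
  set s := μ.real {p | p.1 ∈ Sstar}
  set s₁ := μ.real {p | p.1 ∈ S₁}
  obtain ⟨c, hc⟩ : ∃ c, c = a / s := ⟨_, rfl⟩
  have hc₀ : 0 ≤ c := hc ▸ div_nonneg measureReal_nonneg hpos.le
  have hc₁ : c ≤ 1 := hc ▸ div_le_one_of_le₀ hle hpos.le
  have ha : a = c * s := by rw [hc, div_mul_cancel₀ _ hpos.ne']
  rw [← hc, div_le_iff₀ hpos₁] at herr
  obtain ⟨hlo, hhi⟩ := abs_le.mp hclose
  have hεs : ε * s₁ ≤ ε := mul_le_of_le_one_right hε.le hs₁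
  have hδ : (2 * c - 1) * (s₁ - s) ≤ ε := by
    nlinarith [mul_nonneg hc₀ (sub_nonneg.mpr hhi),
      mul_nonneg (sub_nonneg.mpr hc₁) (neg_le_iff_add_nonneg.mp hlo)]
  rw [ha]
  linarith
end

section
/- Let S*, S₁ ⊆ ℝ^d be measurable sets with P_{(x,y)∼D}[x ∈ S*] > 0 and P_{(x,y)∼D}[x ∈ S₁] > 0, and let α ≥ 0, ε > 0. If P_{(x,y)∼D}[y = 0] ≥ P_{(x,y)∼D}[x ∈ S*], |P_{(x,y)∼D}[x ∈ S₁] − P_{(x,y)∼D}[x ∈ S*]| ≤ ε, and err_{D|S₁}(S₁) ≤ (1+α) · err_{D|S*}(S*), then err_D(S₁) ≤ (1+α) · (err_D(S*) + 3ε). -/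
open MeasureTheory

/-- For almost surely binary labels, `err_D(S) = 2 P[y = 1, x ∈ S] + P[y = 0] - P[x ∈ S]`. -/
theorem errD_eq_two_mul_add_sub {d : ℕ} (μ : Measure (EuclideanSpace ℝ (Fin d) × ℝ))
    [IsFiniteMeasure μ] (hlab : ∀ᵐ p ∂μ, p.2 = 0 ∨ p.2 = 1)
    {S : Set (EuclideanSpace ℝ (Fin d))} (hS : MeasurableSet S) :
    errD μ S = 2 * (μ {p | p.2 = S.indicator (fun _ => (1 : ℝ)) p.1 ∧ p.1 ∈ S}).toReal
      + (μ {p | p.2 = 0}).toReal - (μ {p | p.1 ∈ S}).toReal := by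
  have hT : MeasurableSet {p : EuclideanSpace ℝ (Fin d) × ℝ | p.1 ∈ S} := measurable_fst hS
  have hZ : MeasurableSet {p : EuclideanSpace ℝ (Fin d) × ℝ | p.2 = 0} :=
    measurable_snd (measurableSet_singleton 0)
  have herr := measureReal_inter_add_sdiff (μ := μ)
    (s := {p | p.2 = S.indicator (fun _ => (1 : ℝ)) p.1}) hT
  have hzero := measureReal_inter_add_sdiff (μ := μ) (s := {p | p.2 = 0}) hT
  have hmem := measureReal_inter_add_sdiff (μ := μ) (s := {p | p.1 ∈ S}) hZ
  have hout : {p : EuclideanSpace ℝ (Fin d) × ℝ | p.2 = S.indicator (fun _ => (1 : ℝ)) p.1}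
      \ {p | p.1 ∈ S} = {p | p.2 = 0} \ {p | p.1 ∈ S} := by
    ext p
    by_cases hp : p.1 ∈ S <;> simp [hp]
  have hin : μ.real ({p | p.1 ∈ S} \ {p | p.2 = 0}) =
      μ.real ({p | p.2 = S.indicator (fun _ => (1 : ℝ)) p.1} ∩ {p | p.1 ∈ S}) := by
    refine measureReal_congr (Filter.eventuallyEq_set.mpr ?_)
    filter_upwards [hlab] with p hp
    by_cases hpS : p.1 ∈ S <;> rcases hp with hp | hp <;> simp [hp, hpS]
  rw [hout] at herr
  rw [hin, Set.inter_comm] at hmem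
  simp only [errD, ← measureReal_def, Set.ofPred_and]
  linarith

/-- multiplicative reduction, Case I: `P[y=0] ≥ P[x ∈ S*]`: if
`|P[x ∈ S₁] − P[x ∈ S*]| ≤ ε` and `err_{D|S₁}(S₁) ≤ (1+α)·err_{D|S*}(S*)` then
`err_D(S₁) ≤ (1+α)·(err_D(S*) + 3ε)`. -/
theorem stmt14 (d : ℕ)
    (μ : Measure (EuclideanSpace ℝ (Fin d) × ℝ)) [IsProbabilityMeasure μ]
    (hlab : ∀ᵐ p ∂μ, p.2 = 0 ∨ p.2 = 1)
    (Sstar S₁ : Set (EuclideanSpace ℝ (Fin d)))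
    (hSstar : MeasurableSet Sstar) (hS₁ : MeasurableSet S₁)
    (hpos : 0 < (μ {p | p.1 ∈ Sstar}).toReal) (hpos₁ : 0 < (μ {p | p.1 ∈ S₁}).toReal)
    (α ε : ℝ) (hα : 0 ≤ α) (hε : 0 < ε)
    (hcase : (μ {p | p.1 ∈ Sstar}).toReal ≤ (μ {p | p.2 = 0}).toReal)
    (hclose : |(μ {p | p.1 ∈ S₁}).toReal - (μ {p | p.1 ∈ Sstar}).toReal| ≤ ε)
    (herr : errCond μ S₁ S₁ ≤ (1 + α) * errCond μ Sstar Sstar) :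
    errD μ S₁ ≤ (1 + α) * (errD μ Sstar + 3 * ε) := by
  rw [errD_eq_two_mul_add_sub μ hlab hS₁, errD_eq_two_mul_add_sub μ hlab hSstar]
  unfold errCond at herr
  have hle : (μ {p | p.2 = Sstar.indicator (fun _ => (1 : ℝ)) p.1 ∧ p.1 ∈ Sstar}).toReal ≤
      (μ {p | p.1 ∈ Sstar}).toReal :=
    ENNReal.toReal_mono (measure_ne_top _ _) (measure_mono fun p hp => hp.2)
  have ha : 0 ≤ (μ {p | p.2 = Sstar.indicator (fun _ => (1 : ℝ)) p.1 ∧ p.1 ∈ Sstar}).toReal :=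
    ENNReal.toReal_nonneg
  generalize (μ {p | p.2 = Sstar.indicator (fun _ => (1 : ℝ)) p.1 ∧ p.1 ∈ Sstar}).toReal = a at *
  generalize (μ {p | p.2 = S₁.indicator (fun _ => (1 : ℝ)) p.1 ∧ p.1 ∈ S₁}).toReal = a₁ at *
  generalize (μ {p | p.1 ∈ Sstar}).toReal = s at *
  generalize (μ {p | p.1 ∈ S₁}).toReal = s₁ at *
  generalize (μ {p | p.2 = 0}).toReal = z at *
  obtain ⟨hlo, hhi⟩ := abs_le.mp hclose
  have hratio : a / s ≤ 1 := (div_le_one hpos).mpr hle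
  have hscaled : a / s * s₁ ≤ a + ε := by
    have hcancel : a / s * s = a := div_mul_cancel₀ a hpos.ne'
    have hnonneg : 0 ≤ a / s := div_nonneg ha hpos.le
    nlinarith
  rw [div_le_iff₀ hpos₁, mul_assoc] at herr
  nlinarith [mul_le_mul_of_nonneg_left hscaled (by linarith : (0 : ℝ) ≤ 1 + α),
    mul_nonneg hα (sub_nonneg.mpr hcase), mul_nonneg hα hε.le]
end

section
/- Let S*, S₁ ⊆ ℝ^d be measurable sets with P_{(x,y)∼D}[x ∈ (S*)^c] > 0 and P_{(x,y)∼D}[x ∈ S₁] > 0, and let α ≥ 0, ε > 0. If P_{(x,y)∼D}[y = 1] ≥ P_{(x,y)∼D}[x ∈ (S*)^c], |P_{(x,y)∼D}[x ∈ S₁] − P_{(x,y)∼D}[x ∈ (S*)^c]| ≤ ε, and err_{D|S₁}(S₁^c) ≤ (1+α) · err_{D|(S*)^c}(S*), then err_D(S₁^c) ≤ (1+α) · (err_D(S*) + 3ε). -/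
open MeasureTheory

/-- For `{0,1}`-valued labels, predicting the label `1` exactly on `T` satisfies
`err_D(Tᶜ) + P[x ∈ T] = 2 · P[y = 0, x ∈ T] + P[y = 1]`. -/
lemma errD_compl_add {d : ℕ} (μ : Measure (EuclideanSpace ℝ (Fin d) × ℝ))
    [IsProbabilityMeasure μ] (hlab : ∀ᵐ p ∂μ, p.2 = 0 ∨ p.2 = 1)
    {T : Set (EuclideanSpace ℝ (Fin d))} (hT : MeasurableSet T) :
    errD μ Tᶜ + (μ {p | p.1 ∈ T}).toReal =
      2 * (μ {p | p.2 = Tᶜ.indicator (fun _ => (1 : ℝ)) p.1 ∧ p.1 ∈ T}).toReal +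
        (μ {p | p.2 = 1}).toReal := by
  have hTm : MeasurableSet {p : EuclideanSpace ℝ (Fin d) × ℝ | p.1 ∈ T} := measurable_fst hT
  have hOne : MeasurableSet {p : EuclideanSpace ℝ (Fin d) × ℝ | p.2 = 1} :=
    measurable_snd (measurableSet_singleton 1)
  have hErr := measureReal_inter_add_sdiff (μ := μ)
    (s := {p | p.2 = Tᶜ.indicator (fun _ => (1 : ℝ)) p.1}) hTm
  have hLabel := measureReal_inter_add_sdiff (μ := μ) (s := {p | p.2 = 1}) hTm
  have hMass := measureReal_inter_add_sdiff (μ := μ) (s := {p | p.1 ∈ T}) hOne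
  have hDiff : {p : EuclideanSpace ℝ (Fin d) × ℝ | p.2 = Tᶜ.indicator (fun _ => (1 : ℝ)) p.1} \
      {p | p.1 ∈ T} = {p | p.2 = 1} \ {p | p.1 ∈ T} := by
    ext p
    by_cases hp : p.1 ∈ T <;> simp [hp]
  have hZero : μ.real ({p | p.1 ∈ T} \ {p | p.2 = 1}) =
      μ.real ({p | p.2 = Tᶜ.indicator (fun _ => (1 : ℝ)) p.1} ∩ {p | p.1 ∈ T}) := by
    refine measureReal_congr ?_
    filter_upwards [hlab] with p hp
    refine propext (?_ : (p.1 ∈ T ∧ ¬ p.2 = 1) ↔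
      (p.2 = Tᶜ.indicator (fun _ => (1 : ℝ)) p.1 ∧ p.1 ∈ T))
    by_cases hpT : p.1 ∈ T <;> rcases hp with hp | hp <;> simp [hpT, hp]
  rw [Set.inter_comm] at hMass
  change μ.real {p | p.2 = Tᶜ.indicator (fun _ => (1 : ℝ)) p.1} + μ.real {p | p.1 ∈ T} =
    2 * μ.real ({p | p.2 = Tᶜ.indicator (fun _ => (1 : ℝ)) p.1} ∩ {p | p.1 ∈ T}) +
      μ.real {p | p.2 = 1}
  rw [hDiff] at hErr
  linarith

/-- multiplicative reduction, Case II: `P[y=1] ≥ P[x ∉ S*]`: if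
`|P[x ∈ S₁] − P[x ∈ (S*)ᶜ]| ≤ ε` and `err_{D|S₁}(S₁ᶜ) ≤ (1+α)·err_{D|(S*)ᶜ}(S*)` then
`err_D(S₁ᶜ) ≤ (1+α)·(err_D(S*) + 3ε)`. -/
theorem stmt15 (d : ℕ)
    (μ : Measure (EuclideanSpace ℝ (Fin d) × ℝ)) [IsProbabilityMeasure μ]
    (hlab : ∀ᵐ p ∂μ, p.2 = 0 ∨ p.2 = 1)
    (Sstar S₁ : Set (EuclideanSpace ℝ (Fin d)))
    (hSstar : MeasurableSet Sstar) (hS₁ : MeasurableSet S₁)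
    (hpos : 0 < (μ {p | p.1 ∈ Sstarᶜ}).toReal) (hpos₁ : 0 < (μ {p | p.1 ∈ S₁}).toReal)
    (α ε : ℝ) (hα : 0 ≤ α) (hε : 0 < ε)
    (hcase : (μ {p | p.1 ∈ Sstarᶜ}).toReal ≤ (μ {p | p.2 = 1}).toReal)
    (hclose : |(μ {p | p.1 ∈ S₁}).toReal - (μ {p | p.1 ∈ Sstarᶜ}).toReal| ≤ ε)
    (herr : errCond μ S₁ S₁ᶜ ≤ (1 + α) * errCond μ Sstarᶜ Sstar) :
    errD μ S₁ᶜ ≤ (1 + α) * (errD μ Sstar + 3 * ε) := by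
  have hStar := errD_compl_add μ hlab hSstar.compl
  have hOne := errD_compl_add μ hlab hS₁
  rw [compl_compl] at hStar
  have hle : (μ {p | p.2 = Sstar.indicator (fun _ => (1 : ℝ)) p.1 ∧ p.1 ∈ Sstarᶜ}).toReal ≤
      (μ {p | p.1 ∈ Sstarᶜ}).toReal :=
    measureReal_mono fun p hp => hp.2
  have hnonneg :
      0 ≤ (μ {p | p.2 = Sstar.indicator (fun _ => (1 : ℝ)) p.1 ∧ p.1 ∈ Sstarᶜ}).toReal :=
    ENNReal.toReal_nonneg
  unfold errCond at herr
  generalize (μ {p | p.2 = Sstar.indicator (fun _ => (1 : ℝ)) p.1 ∧ p.1 ∈ Sstarᶜ}).toReal = a at *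
  generalize (μ {p | p.2 = S₁ᶜ.indicator (fun _ => (1 : ℝ)) p.1 ∧ p.1 ∈ S₁}).toReal = b at *
  generalize (μ {p | p.1 ∈ Sstarᶜ}).toReal = t at *
  generalize (μ {p | p.1 ∈ S₁}).toReal = s at *
  generalize (μ {p | p.2 = 1}).toReal = q at *
  obtain ⟨hlow, hup⟩ := abs_le.mp hclose
  have hratio : a / t * s ≤ a + ε := by
    have hdiv : a / t ≤ 1 := (div_le_one hpos).mpr hle
    have hcancel : a / t * t = a := div_mul_cancel₀ a hpos.ne'
    nlinarith [div_nonneg hnonneg hpos.le]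
  have hb : b ≤ (1 + α) * (a + ε) := by
    rw [div_le_iff₀ hpos₁, mul_assoc] at herr
    exact herr.trans (mul_le_mul_of_nonneg_left hratio (by linarith))
  nlinarith [mul_nonneg hα (sub_nonneg.mpr hcase), mul_nonneg hα hε.le]
end
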